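/- arXiv:2110.07952 — 4 statements merged into one kernel-verified Lean document; each statement's English description precedes it below -/
import Mathlib

section
/- Let n ∈ ℕ, k ∈ ℕ with k ≥ 1, and let the coefficients A_l, l = 0, 1, …, (k−1)n, be defined by the polynomial identity (1 + x + ⋯ + x^{k−1})^n = Σ_{l=0}^{(k−1)n} A_l x^l. Then for every sequence ξ : ℤ → ℂ, every step μ ∈ ℤ and every m ∈ ℤ, one has ξ^{(n)}(m, kμ) = Σ_{l=0}^{(k−1)n} A_l · ξ^{(n)}(m − lμ, μ). -/
/-- The stochastic `n`-th increment of a sequence `ξ : ℤ → ℂ` with step `μ` at point `m`: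
`ξ^{(n)}(m, μ) = Σ_{l=0}^{n} (−1)^l C(n,l) ξ(m − lμ)`. -/
noncomputable def increment (ξ : ℤ → ℂ) (n : ℕ) (μ m : ℤ) : ℂ :=
  ∑ l ∈ Finset.range (n + 1), (-1 : ℂ) ^ l * (n.choose l : ℂ) * ξ (m - (l : ℤ) * μ)

/-!
Let `S` be the shift by `h`, so that `Δ_[h] = S - 1` and the shift by `k • h` is `S ^ k`. The
factorization `S ^ k - 1 = (1 + S + ⋯ + S ^ (k - 1)) (S - 1)` raised to the power `n` expresses the
`n`-th difference with step `k • h` through the one with step `h`, and substituting `S` for `X` in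
the defining identity of the coefficients expands the first factor. The increments with step `μ`
are, up to sign, iterated forward differences with step `-μ`.
-/

section

open Finset Polynomial
open scoped fwdDiff

theorem pow_sub_one_pow_eq_geom_sum_pow_mul {S : Type*} [Ring S] (x : S) (k n : ℕ) :
    (x ^ k - 1) ^ n = (∑ j ∈ range k, x ^ j) ^ n * (x - 1) ^ n := by
  have hcomm : Commute (∑ j ∈ range k, x ^ j) (x - 1) :=
    (geom_sum_mul x k).trans (mul_geom_sum x k).symm
  rw [← geom_sum_mul, hcomm.mul_pow]

variable {R M G : Type*} [CommSemiring R] [AddCommMonoid M] [AddCommGroup G] [Module R G]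

variable (R G) in
/-- The operator `f ↦ f (· + h)` shifting the argument by `h`, as an `R`-linear endomorphism of
`M → G`, so that polynomials with coefficients in `R` can be evaluated at it. -/
def shiftEnd (h : M) : Module.End R (M → G) :=
  LinearMap.funLeft R G (· + h)

@[simp]
theorem shiftEnd_apply (h : M) (f : M → G) (y : M) : shiftEnd R G h f y = f (y + h) :=
  rfl

theorem shiftEnd_pow (h : M) (l : ℕ) : shiftEnd R G h ^ l = shiftEnd R G (l • h) := by
  induction l with
  | zero => ext f y; simp
  | succ l ih => ext f y; simp [pow_succ, ih, succ_nsmul, add_assoc]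

variable (R) in
theorem fwdDiff_iter_eq_shiftEnd_sub_one_pow (h : M) (n : ℕ) (f : M → G) :
    (Δ_[h])^[n] f = ((shiftEnd R G h - 1) ^ n) f :=
  (Module.End.pow_apply (shiftEnd R G h - 1) n f).symm

theorem increment_mul_step_general {n k N : ℕ} {A : ℕ → R}
    (hA : (∑ j ∈ range k, (X : R[X]) ^ j) ^ n = ∑ l ∈ range N, C (A l) * X ^ l)
    (f : M → G) (h y : M) :
    (Δ_[k • h])^[n] f y = ∑ l ∈ range N, A l • (Δ_[h])^[n] f (y + l • h) := by
  have hA_shift : (∑ j ∈ range k, shiftEnd R G h ^ j) ^ n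
      = ∑ l ∈ range N, A l • shiftEnd R G h ^ l := by
    simpa [Algebra.smul_def] using congrArg (aeval (shiftEnd R G h)) hA
  have hfactor : (shiftEnd R G (k • h) - 1) ^ n
      = (∑ l ∈ range N, A l • shiftEnd R G h ^ l) * (shiftEnd R G h - 1) ^ n := by
    rw [← shiftEnd_pow, pow_sub_one_pow_eq_geom_sum_pow_mul, hA_shift]
  simp only [fwdDiff_iter_eq_shiftEnd_sub_one_pow R, hfactor, shiftEnd_pow, Module.End.mul_apply,
    LinearMap.sum_apply, LinearMap.smul_apply, Finset.sum_apply, Pi.smul_apply, shiftEnd_apply]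

theorem increment_eq_neg_one_pow_mul_fwdDiff_iter (ξ : ℤ → ℂ) (n : ℕ) (μ m : ℤ) :
    increment ξ n μ m = (-1) ^ n * (Δ_[-μ])^[n] ξ m := by
  rw [increment, fwdDiff_iter_eq_sum_shift, mul_sum]
  refine sum_congr rfl fun l hl => ?_
  have hsign : (-1 : ℂ) ^ l = (-1) ^ n * (-1) ^ (n - l) := by
    obtain ⟨d, rfl⟩ := Nat.exists_eq_add_of_le (mem_range_succ_iff.mp hl)
    rw [Nat.add_sub_cancel_left, pow_add, mul_assoc, ← mul_pow, neg_one_mul, neg_neg, one_pow,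
      mul_one]
  simp [hsign, zsmul_eq_mul, mul_assoc, sub_eq_add_neg]

end

/-- if the coefficients `A l`, `l = 0, …, (k−1)n`, are defined by the polynomial
identity `(1 + x + ⋯ + x^{k−1})^n = Σ_{l=0}^{(k−1)n} A_l x^l`, then
`ξ^{(n)}(m, kμ) = Σ_{l=0}^{(k−1)n} A_l ξ^{(n)}(m − lμ, μ)`. -/
theorem increment_mul_step (n k : ℕ) (hk : 1 ≤ k) (A : ℕ → ℂ)
    (hA : (∑ j ∈ Finset.range k, (Polynomial.X : Polynomial ℂ) ^ j) ^ n
        = ∑ l ∈ Finset.range ((k - 1) * n + 1), Polynomial.C (A l) * Polynomial.X ^ l)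
    (ξ : ℤ → ℂ) (μ m : ℤ) :
    increment ξ n ((k : ℤ) * μ) m
      = ∑ l ∈ Finset.range ((k - 1) * n + 1), A l * increment ξ n μ (m - (l : ℤ) * μ) := by
  have hstep := increment_mul_step_general hA ξ (-μ) m
  simp only [smul_neg, nsmul_eq_mul, ← sub_eq_add_neg, smul_eq_mul] at hstep
  simp only [increment_eq_neg_one_pow_mul_fwdDiff_iter, hstep, Finset.mul_sum, mul_left_comm]
end

section
/- Let n ≥ 1 and let f : ℤ → ℂ be a function such that for every step μ ∈ ℤ the n-th μ-difference of f is independent of the base point, i.e. there is a function c^{(n)} : ℤ → ℂ with Σ_{l=0}^{n} (−1)^l C(n,l) f(m − lμ) = c^{(n)}(μ) for all m ∈ ℤ. Then there exists a constant c ∈ ℂ such that c^{(n)}(μ) = c · μ^n for every μ ∈ ℤ. -/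
/-!
Telescoping writes the difference with step `k • h` as a sum of `k` translates of the difference
with step `h`. If the `n`-th difference of `f` with step `h` is a constant `c`, then each of the `n`
differences with step `k • h` therefore contributes a factor `k`, and the `n`-th difference with
step `k • h` is `k ^ n • c`. Reversing the step changes an `n`-th difference by `(-1) ^ n` and a
translation, which settles negative `k`.
-/

open Finset fwdDiff

section AddCommMonoid

variable {M G : Type*} [AddCommMonoid M] [AddCommGroup G]

lemma fwdDiff_nsmul (h : M) (k : ℕ) (f : M → G) :
    Δ_[k • h] f = ∑ i ∈ range k, fun x ↦ Δ_[h] f (x + i • h) := by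
  ext x
  simpa [fwdDiff, add_assoc, succ_nsmul] using (sum_range_sub (fun i ↦ f (x + i • h)) k).symm

lemma fwdDiff_iter_nsmul_of_const {h : M} {n : ℕ} {f : M → G} {c : G}
    (hf : ∀ x, (Δ_[h])^[n] f x = c) (k : ℕ) (x : M) : (Δ_[k • h])^[n] f x = k ^ n • c := by
  induction n generalizing f x with
  | zero => simpa using hf x
  | succ n ih =>
    have hΔ (y : M) : (Δ_[k • h])^[n] (Δ_[h] f) y = k ^ n • c := ih hf y
    calc (Δ_[k • h])^[n + 1] f x
        = ∑ i ∈ range k, (Δ_[k • h])^[n] (Δ_[h] f) (x + i • h) := by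
          simp only [Function.iterate_succ_apply, fwdDiff_nsmul h k f, fwdDiff_iter_finsetSum,
            Finset.sum_apply, fwdDiff_iter_comp_add]
      _ = k ^ (n + 1) • c := by simp [hΔ, pow_succ', mul_smul]

end AddCommMonoid

section AddCommGroup

variable {M G : Type*} [AddCommGroup M] [AddCommGroup G]

lemma fwdDiff_iter_neg (h : M) (n : ℕ) (f : M → G) (x : M) :
    (Δ_[-h])^[n] f x = (-1 : ℤ) ^ n • (Δ_[h])^[n] f (x - n • h) := by
  induction n generalizing x with
  | zero => simp
  | succ n ih =>
    have hstart : x + -h - n • h = x - (n + 1) • h := by rw [succ_nsmul]; abel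
    have hend : x - n • h = x - (n + 1) • h + h := by rw [succ_nsmul]; abel
    simp only [Function.iterate_succ_apply', fwdDiff, ih]
    rw [hstart, hend, ← smul_sub, pow_succ, mul_neg_one, neg_smul, ← smul_neg, neg_sub]

lemma fwdDiff_iter_zsmul_of_const {h : M} {n : ℕ} {f : M → G} {c : G}
    (hf : ∀ x, (Δ_[h])^[n] f x = c) (k : ℤ) (x : M) : (Δ_[k • h])^[n] f x = k ^ n • c := by
  have hnat (j : ℕ) (y : M) : (Δ_[(j : ℤ) • h])^[n] f y = (j : ℤ) ^ n • c := by
    rw [natCast_zsmul, fwdDiff_iter_nsmul_of_const hf, ← Nat.cast_pow, natCast_zsmul]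
  obtain ⟨j, rfl | rfl⟩ := k.eq_nat_or_neg
  · exact hnat j x
  · rw [neg_smul, fwdDiff_iter_neg, hnat, smul_smul, ← neg_pow]

lemma sum_neg_one_pow_mul_choose_smul_sub (h : M) (n : ℕ) (f : M → G) (x : M) :
    ∑ l ∈ range (n + 1), ((-1 : ℤ) ^ l * n.choose l) • f (x - l • h) =
      (Δ_[h])^[n] f (x - n • h) := by
  rw [fwdDiff_iter_eq_sum_shift, ← sum_range_reflect]
  refine sum_congr rfl fun l hl ↦ ?_
  have hln : l ≤ n := mem_range_succ_iff.mp hl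
  have hpoint : x - (n - l) • h = x - n • h + l • h := by rw [sub_nsmul h hln]; abel
  rw [Nat.add_sub_cancel, Nat.choose_symm hln, hpoint]

theorem mean_value_of_stationary_increment_general {h : M} {n : ℕ} {f : M → G} {c : G}
    (hf : ∀ x, ∑ l ∈ range (n + 1), ((-1 : ℤ) ^ l * n.choose l) • f (x - l • h) = c)
    (k : ℤ) (x : M) :
    ∑ l ∈ range (n + 1), ((-1 : ℤ) ^ l * n.choose l) • f (x - l • k • h) = k ^ n • c := by
  simp only [sum_neg_one_pow_mul_choose_smul_sub] at hf ⊢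
  have hconst (y : M) : (Δ_[h])^[n] f y = c := by simpa using hf (y + n • h)
  exact fwdDiff_iter_zsmul_of_const hconst k _

end AddCommGroup

/-- if, for every step `μ`, the `n`-th `μ`-difference
`Σ_{l=0}^{n} (−1)^l C(n,l) f(m − lμ)` of `f : ℤ → ℂ` does not depend on the base point `m`,
being equal to `c^{(n)}(μ)`, then there is a constant `c` with `c^{(n)}(μ) = c · μ^n`. -/
theorem mean_value_of_stationary_increment (n : ℕ) (hn : 1 ≤ n) (f : ℤ → ℂ) (cn : ℤ → ℂ)
    (h : ∀ μ m : ℤ,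
      ∑ l ∈ Finset.range (n + 1), (-1 : ℂ) ^ l * (n.choose l : ℂ) * f (m - (l : ℤ) * μ) = cn μ) :
    ∃ c : ℂ, ∀ μ : ℤ, cn μ = c * (μ : ℂ) ^ n := by
  refine ⟨cn 1, fun μ ↦ ?_⟩
  simpa [← h μ 0, mul_comm (cn 1)] using mean_value_of_stationary_increment_general
    (h := (1 : ℤ)) (f := f) (c := cn 1) (by simpa using h 1) μ 0
end

section
/- Let n ≥ 1 and let F₁, F₂ be finite nonnegative Borel measures on [−π, π). For μ ∈ ℤ define G_μ : [−π, π) → ℂ by G_μ(λ) = (1 − e^{−iμλ})^n / (iλ)^n for λ ≠ 0 and G_μ(0) = μ^n. If for all m, μ₁, μ₂ ∈ ℤ one has ∫_{[−π,π)} e^{iλm} G_{μ₁}(λ) conj(G_{μ₂}(λ)) dF₁(λ) = ∫_{[−π,π)} e^{iλm} G_{μ₁}(λ) conj(G_{μ₂}(λ)) dF₂(λ), then F₁ = F₂. -/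
open MeasureTheory

/-- The function `G_μ(λ) = (1 − e^{−iμλ})^n / (iλ)^n`, extended continuously by
`G_μ(0) = μ^n`. -/
noncomputable def Gker (n : ℕ) (μ : ℤ) (lam : ℝ) : ℂ :=
  if lam = 0 then (μ : ℂ) ^ n
  else (1 - Complex.exp (-Complex.I * (μ : ℂ) * (lam : ℂ))) ^ n / (Complex.I * (lam : ℂ)) ^ n

/-!
Since `1 - e^{-iμλ} = 2i e^{-iμλ/2} sin (μλ/2)`, one has `|G_μ(λ)|² = (μ sinc (μλ/2))^{2n}`. For
`μ = 1` this weight is positive on `[-π, π)`, because the first zero of `sinc` is `π`. Taking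
`μ₁ = μ₂ = 1`, the weighted measures `|G₁|² dF₁` and `|G₁|² dF₂` have the same Fourier
coefficients. As trigonometric polynomials are dense in the continuous functions on the circle,
the weighted measures coincide, and dividing by the weight gives `F₁ = F₂`.
-/

section CompactSpace

variable {X 𝕜 : Type*} [TopologicalSpace X] [CompactSpace X] [MeasurableSpace X] [BorelSpace X]
  [RCLike 𝕜]

variable (𝕜) in
/-- Integration against a finite Borel measure on a compact space, as a continuous linear
functional on the continuous functions with the supremum norm. -/
noncomputable def continuousMapIntegralCLM (μ : Measure X) [IsFiniteMeasure μ] :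
    C(X, 𝕜) →L[𝕜] 𝕜 :=
  (L1.integralCLM' 𝕜).comp (ContinuousMap.toLp 1 μ 𝕜)

theorem continuousMapIntegralCLM_apply (μ : Measure X) [IsFiniteMeasure μ] (f : C(X, 𝕜)) :
    continuousMapIntegralCLM 𝕜 μ f = ∫ x, f x ∂μ := by
  rw [← integral_congr_ae (ContinuousMap.coeFn_toLp (p := 1) (𝕜 := 𝕜) μ f),
    ← L1.integral_eq_integral, L1.integral_eq' 𝕜]
  rfl

theorem ext_of_forall_mem_integral_eq_of_span_dense [HasOuterApproxClosed X] {μ ν : Measure X}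
    [IsFiniteMeasure μ] [IsFiniteMeasure ν] {s : Set C(X, 𝕜)}
    (hs : (Submodule.span 𝕜 s).topologicalClosure = ⊤)
    (h : ∀ f ∈ s, ∫ x, f x ∂μ = ∫ x, f x ∂ν) : μ = ν := by
  have functionals_eq : continuousMapIntegralCLM 𝕜 μ = continuousMapIntegralCLM 𝕜 ν := by
    refine ContinuousLinearMap.ext_on (Submodule.dense_iff_topologicalClosure_eq_top.2 hs) ?_
    intro f hf
    simpa only [continuousMapIntegralCLM_apply] using h f hf
  refine ext_of_forall_integral_eq_of_IsFiniteMeasure fun f => ?_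
  have integral_coe_eq :=
    DFunLike.congr_fun functionals_eq ⟨fun x => (f x : 𝕜), by fun_prop⟩
  simp only [continuousMapIntegralCLM_apply, ContinuousMap.coe_mk, integral_ofReal]
    at integral_coe_eq
  exact_mod_cast integral_coe_eq

end CompactSpace

section AddCircle

variable {T : ℝ} [Fact (0 < T)]

theorem ext_of_forall_integral_fourier_eq {μ ν : Measure (AddCircle T)} [IsFiniteMeasure μ]
    [IsFiniteMeasure ν] (h : ∀ m : ℤ, ∫ x, fourier m x ∂μ = ∫ x, fourier m x ∂ν) : μ = ν :=
  ext_of_forall_mem_integral_eq_of_span_dense span_fourier_closure_eq_top <| by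
    rintro _ ⟨m, rfl⟩
    exact h m

variable {a : ℝ} {μ ν : Measure ℝ}

theorem map_equivIco_map_coe_eq_self (hμ : ∀ᵐ x ∂μ, x ∈ Set.Ico a (a + T)) :
    (μ.map ((↑) : ℝ → AddCircle T)).map (fun y => (AddCircle.equivIco T a y : ℝ)) = μ := by
  have measurable_lift : Measurable fun y => (AddCircle.equivIco T a y : ℝ) :=
    measurable_subtype_coe.comp (AddCircle.measurableEquivIco T a).measurable
  have lift_coe : (fun y => (AddCircle.equivIco T a y : ℝ)) ∘ (↑) =ᵐ[μ] id :=
    hμ.mono fun x hx => AddCircle.equivIco_coe_of_mem hx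
  rw [Measure.map_map measurable_lift AddCircle.measurable_mk', Measure.map_congr lift_coe,
    Measure.map_id]

theorem ext_of_forall_integral_fourier_coe_eq [IsFiniteMeasure μ] [IsFiniteMeasure ν]
    (hμ : ∀ᵐ x ∂μ, x ∈ Set.Ico a (a + T)) (hν : ∀ᵐ x ∂ν, x ∈ Set.Ico a (a + T))
    (h : ∀ m : ℤ, ∫ x : ℝ, fourier m (x : AddCircle T) ∂μ =
      ∫ x : ℝ, fourier m (x : AddCircle T) ∂ν) : μ = ν := by
  have map_coe_eq : μ.map ((↑) : ℝ → AddCircle T) = ν.map (↑) := by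
    refine ext_of_forall_integral_fourier_eq fun m => ?_
    have integral_map_coe (ρ : Measure ℝ) := integral_map (μ := ρ)
      (AddCircle.measurable_mk' (a := T)).aemeasurable
      (fourier m).continuous.aestronglyMeasurable
    rw [integral_map_coe, integral_map_coe, h m]
  rw [← map_equivIco_map_coe_eq_self hμ, map_coe_eq, map_equivIco_map_coe_eq_self hν]

end AddCircle

theorem eq_of_withDensity_eq_withDensity {X : Type*} [MeasurableSpace X] {μ ν : Measure X}
    {f : X → ENNReal} (hf : Measurable f) (hμ₀ : ∀ᵐ x ∂μ, f x ≠ 0) (hμ : ∀ᵐ x ∂μ, f x ≠ ⊤)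
    (hν₀ : ∀ᵐ x ∂ν, f x ≠ 0) (hν : ∀ᵐ x ∂ν, f x ≠ ⊤)
    (h : μ.withDensity f = ν.withDensity f) : μ = ν := by
  rw [← withDensity_inv_same hf hμ₀ hμ, h, withDensity_inv_same hf hν₀ hν]

theorem integral_withDensity_ofReal_eq_integral_smul {X E : Type*} [MeasurableSpace X]
    [NormedAddCommGroup E] [NormedSpace ℝ E] {μ : Measure X} {w : X → ℝ} (hw : Measurable w)
    (hw₀ : 0 ≤ᵐ[μ] w) (f : X → E) :
    ∫ x, f x ∂μ.withDensity (fun x => ENNReal.ofReal (w x)) = ∫ x, w x • f x ∂μ := by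
  rw [integral_withDensity_eq_integral_toReal_smul hw.ennreal_ofReal (by simp)]
  refine integral_congr_ae ?_
  filter_upwards [hw₀] with x hx
  rw [ENNReal.toReal_ofReal hx]

theorem ext_of_forall_integral_smul_fourier_coe_eq {T a : ℝ} [Fact (0 < T)] {μ ν : Measure ℝ}
    {w : ℝ → ℝ} (hw : Measurable w) (hwμ : Integrable w μ) (hwν : Integrable w ν)
    (hw₀ : ∀ x ∈ Set.Ico a (a + T), 0 < w x)
    (hμ : ∀ᵐ x ∂μ, x ∈ Set.Ico a (a + T)) (hν : ∀ᵐ x ∂ν, x ∈ Set.Ico a (a + T))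
    (h : ∀ m : ℤ, ∫ x : ℝ, w x • fourier m (x : AddCircle T) ∂μ =
      ∫ x : ℝ, w x • fourier m (x : AddCircle T) ∂ν) : μ = ν := by
  have hμ₀ : ∀ᵐ x ∂μ, 0 < w x := hμ.mono hw₀
  have hν₀ : ∀ᵐ x ∂ν, 0 < w x := hν.mono hw₀
  have := isFiniteMeasure_withDensity_ofReal hwμ.hasFiniteIntegral
  have := isFiniteMeasure_withDensity_ofReal hwν.hasFiniteIntegral
  refine eq_of_withDensity_eq_withDensity hw.ennreal_ofReal
    (hμ₀.mono fun x hx => (ENNReal.ofReal_pos.2 hx).ne') (by simp)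
    (hν₀.mono fun x hx => (ENNReal.ofReal_pos.2 hx).ne') (by simp) ?_
  refine ext_of_forall_integral_fourier_coe_eq ((withDensity_absolutelyContinuous _ _).ae_le hμ)
    ((withDensity_absolutelyContinuous _ _).ae_le hν) fun m => ?_
  rw [integral_withDensity_ofReal_eq_integral_smul hw (hμ₀.mono fun _ => le_of_lt),
    integral_withDensity_ofReal_eq_integral_smul hw (hν₀.mono fun _ => le_of_lt), h m]

theorem fourier_coe_two_pi_apply (m : ℤ) (x : ℝ) :
    fourier m (x : AddCircle (2 * Real.pi)) = Complex.exp (Complex.I * x * m) := by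
  have : (Real.pi : ℂ) ≠ 0 := mod_cast Real.pi_ne_zero
  rw [fourier_coe_apply]
  congr 1
  push_cast
  field_simp

theorem sinc_pos_of_abs_lt_pi {x : ℝ} (hx : |x| < Real.pi) : 0 < Real.sinc x := by
  rw [abs_lt] at hx
  rcases lt_trichotomy x 0 with hneg | rfl | hpos
  · rw [Real.sinc_of_ne_zero hneg.ne]
    exact div_pos_of_neg_of_neg (Real.sin_neg_of_neg_of_neg_pi_lt hneg hx.1) hneg
  · simp
  · rw [Real.sinc_of_ne_zero hpos.ne']
    exact div_pos (Real.sin_pos_of_pos_of_lt_pi hpos hx.2) hpos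

theorem norm_Gker (n : ℕ) (μ : ℤ) (x : ℝ) :
    ‖Gker n μ x‖ = |μ * Real.sinc (μ * x / 2)| ^ n := by
  rcases eq_or_ne x 0 with rfl | hx
  · simp [Gker]
  rcases eq_or_ne μ 0 with rfl | hμ
  · simp [Gker, hx, ← div_pow]
  have norm_numerator :
      ‖1 - Complex.exp (-Complex.I * μ * x)‖ = |2 * Real.sin (μ * x / 2)| := by
    have := Complex.norm_exp_I_mul_ofReal_sub_one (-(μ * x))
    rw [norm_sub_rev, neg_div, Real.sin_neg, mul_neg, norm_neg, Real.norm_eq_abs] at this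
    rw [← this]
    congr 3
    push_cast
    ring
  rw [Gker, if_neg hx, ← div_pow, norm_pow, norm_div, norm_numerator, norm_mul, Complex.norm_I,
    one_mul, Complex.norm_real, Real.norm_eq_abs, ← abs_div,
    Real.sinc_of_ne_zero (by positivity)]
  congr 2
  field_simp

theorem Gker_mul_conj (n : ℕ) (μ : ℤ) (x : ℝ) :
    Gker n μ x * starRingEnd ℂ (Gker n μ x) =
      (((μ * Real.sinc (μ * x / 2)) ^ (2 * n) : ℝ) : ℂ) := by
  rw [Complex.mul_conj, Complex.normSq_eq_norm_sq, norm_Gker, ← pow_mul, mul_comm n,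
    (even_two_mul n).pow_abs]

theorem exp_mul_Gker_mul_conj (n : ℕ) (m μ : ℤ) (x : ℝ) :
    Complex.exp (Complex.I * x * m) * Gker n μ x * starRingEnd ℂ (Gker n μ x) =
      (μ * Real.sinc (μ * x / 2)) ^ (2 * n) • fourier m (x : AddCircle (2 * Real.pi)) := by
  rw [mul_assoc, Gker_mul_conj, fourier_coe_two_pi_apply, Complex.real_smul, mul_comm]

theorem integrable_sinc_comp_pow {X : Type*} [MeasurableSpace X] {μ : Measure X}
    [IsFiniteMeasure μ] {f : X → ℝ} (hf : AEMeasurable f μ) (k : ℕ) :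
    Integrable (fun x => Real.sinc (f x) ^ k) μ := by
  refine .of_bound (hf.sinc.pow_const k).aestronglyMeasurable 1 (.of_forall fun x => ?_)
  rw [norm_pow, Real.norm_eq_abs]
  exact pow_le_one₀ (abs_nonneg _) (Real.abs_sinc_le_one _)

theorem spectral_measure_unique_general (n : ℕ)
    (F₁ F₂ : Measure ℝ) [IsFiniteMeasure F₁] [IsFiniteMeasure F₂]
    (hF₁ : F₁ (Set.Ico (-Real.pi) Real.pi)ᶜ = 0)
    (hF₂ : F₂ (Set.Ico (-Real.pi) Real.pi)ᶜ = 0)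
    (h : ∀ m : ℤ,
      (∫ lam in Set.Ico (-Real.pi) Real.pi,
        Complex.exp (Complex.I * (lam : ℂ) * (m : ℂ)) * Gker n 1 lam
          * (starRingEnd ℂ) (Gker n 1 lam) ∂F₁)
      = ∫ lam in Set.Ico (-Real.pi) Real.pi,
        Complex.exp (Complex.I * (lam : ℂ) * (m : ℂ)) * Gker n 1 lam
          * (starRingEnd ℂ) (Gker n 1 lam) ∂F₂) :
    F₁ = F₂ := by
  have : Fact (0 < 2 * Real.pi) := ⟨Real.two_pi_pos⟩
  have Ico_eq : Set.Ico (-Real.pi) (-Real.pi + 2 * Real.pi) = Set.Ico (-Real.pi) Real.pi := by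
    ring_nf
  have mem_Ico₁ : ∀ᵐ x ∂F₁, x ∈ Set.Ico (-Real.pi) Real.pi := hF₁
  have mem_Ico₂ : ∀ᵐ x ∂F₂, x ∈ Set.Ico (-Real.pi) Real.pi := hF₂
  have weight_pos : ∀ x ∈ Set.Ico (-Real.pi) Real.pi, 0 < Real.sinc (x / 2) ^ (2 * n) :=
    fun x hx => pow_pos (sinc_pos_of_abs_lt_pi <|
      abs_lt.2 ⟨by linarith [hx.1, Real.pi_pos], by linarith [hx.2, Real.pi_pos]⟩) _
  have weight_integrable (F : Measure ℝ) [IsFiniteMeasure F] :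
      Integrable (fun x => Real.sinc (x / 2) ^ (2 * n)) F :=
    integrable_sinc_comp_pow (by fun_prop) _
  refine ext_of_forall_integral_smul_fourier_coe_eq (T := 2 * Real.pi) (a := -Real.pi)
    (by fun_prop) (weight_integrable F₁) (weight_integrable F₂) (Ico_eq ▸ weight_pos)
    (Ico_eq ▸ mem_Ico₁) (Ico_eq ▸ mem_Ico₂) fun m => ?_
  simpa only [Measure.restrict_eq_self_of_ae_mem mem_Ico₁,
    Measure.restrict_eq_self_of_ae_mem mem_Ico₂, exp_mul_Gker_mul_conj, Int.cast_one, one_mul]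
    using h m

/-- a finite nonnegative Borel measure `F` on `[−π, π)` is uniquely determined
by the structural function `D(m; μ₁, μ₂) = ∫_{[−π,π)} e^{iλm} G_{μ₁}(λ) conj(G_{μ₂}(λ)) dF(λ)`. -/
theorem spectral_measure_unique (n : ℕ) (hn : 1 ≤ n)
    (F₁ F₂ : Measure ℝ) [IsFiniteMeasure F₁] [IsFiniteMeasure F₂]
    (hF₁ : F₁ (Set.Ico (-Real.pi) Real.pi)ᶜ = 0)
    (hF₂ : F₂ (Set.Ico (-Real.pi) Real.pi)ᶜ = 0)
    (h : ∀ m μ₁ μ₂ : ℤ,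
      (∫ lam in Set.Ico (-Real.pi) Real.pi,
        Complex.exp (Complex.I * (lam : ℂ) * (m : ℂ)) * Gker n μ₁ lam
          * (starRingEnd ℂ) (Gker n μ₂ lam) ∂F₁)
      = ∫ lam in Set.Ico (-Real.pi) Real.pi,
        Complex.exp (Complex.I * (lam : ℂ) * (m : ℂ)) * Gker n μ₁ lam
          * (starRingEnd ℂ) (Gker n μ₂ lam) ∂F₂) :
    F₁ = F₂ := by
  exact spectral_measure_unique_general n F₁ F₂ hF₁ hF₂ fun m => h m 1 1
end

section
/- Let n ≥ 1, T ≥ 1, and let f : ℝ → Matrix (Fin T) (Fin T) ℂ be measurable, integrable on [−π, π), with f(λ) Hermitian positive semidefinite for almost every λ. For μ ∈ ℤ define G_μ(λ) = (1 − e^{−iμλ})^n / (iλ)^n for λ ≠ 0 and G_μ(0) = μ^n, and define the matrix-valued kernel D(m; μ₁, μ₂) = ∫_{−π}^{π} e^{iλm} G_{μ₁}(λ) conj(G_{μ₂}(λ)) f(λ) dλ. Then for every r ∈ ℕ, every m₁, …, m_r ∈ ℤ, μ₁, …, μ_r ∈ ℤ and every choice of vectors c₁, …, c_r ∈ ℂ^T,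 the sum Σ_{j=1}^{r} Σ_{k=1}^{r} c_j^* · D(m_j − m_k; μ_j, μ_k) · c_k is a nonnegative real number (here c^* denotes conjugate transpose). -/
open MeasureTheory
open scoped ComplexOrder

/-!
Writing `W_j(λ) = e^{iλ m_j} G_{μ_j}(λ)`, the integrand of `D(m_j − m_k; μ_j, μ_k)` is
`W_j(λ) conj(W_k(λ)) f(λ)`, the `(j, k)` block of the Kronecker product of the rank-one matrix
`W(λ) W(λ)^*` with `f(λ)`. That product is positive semidefinite for almost every `λ`, and
integrating preserves this; integrability holds because `|G_μ| ≤ |μ|^n`.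
-/

section PosSemidef

open scoped Matrix

variable {𝕜 ι κ : Type*} [RCLike 𝕜]

theorem posSemidef_integral {α : Type*} [MeasurableSpace α] {ν : Measure α}
    {A : α → Matrix ι ι 𝕜} (hint : ∀ i j, Integrable (fun x => A x i j) ν)
    (hA : ∀ᵐ x ∂ν, (A x).PosSemidef) :
    (Matrix.of fun i j => ∫ x, A x i j ∂ν).PosSemidef := by
  refine ⟨Matrix.IsHermitian.ext fun i j => ?_, fun v => ?_⟩
  · calc star (∫ x, A x j i ∂ν) = ∫ x, star (A x j i) ∂ν := integral_conj.symm
      _ = ∫ x, A x i j ∂ν := integral_congr_ae (hA.mono fun x hx => hx.isHermitian.apply i j)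
  · have hterm (i j : ι) : Integrable (fun x => star (v i) * A x i j * v j) ν :=
      ((hint i j).const_mul _).mul_const _
    calc 0 ≤ ∫ x, ∑ i ∈ v.support, ∑ j ∈ v.support, star (v i) * A x i j * v j ∂ν :=
          integral_nonneg_of_ae (hA.mono fun x hx => hx.2 v)
      _ = ∑ i ∈ v.support, ∑ j ∈ v.support, star (v i) * (∫ x, A x i j ∂ν) * v j := by
          simp only [integral_finsetSum _ fun i _ => integrable_finsetSum _ fun j _ => hterm i j,
            integral_finsetSum _ fun j _ => hterm _ j, integral_mul_const, integral_const_mul]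

theorem sum_dotProduct_mulVec_nonneg_of_posSemidef_comp [Fintype ι] [Fintype κ]
    {B : Matrix κ κ (Matrix ι ι 𝕜)} (hB : (Matrix.comp κ κ ι ι 𝕜 B).PosSemidef)
    (c : κ → ι → 𝕜) : 0 ≤ ∑ j, ∑ k, star (c j) ⬝ᵥ (B j k *ᵥ c k) := by
  have hblock (j : κ) (a : ι) :
      (Matrix.comp κ κ ι ι 𝕜 B *ᵥ Function.uncurry c) (j, a) = ∑ k, (B j k *ᵥ c k) a :=
    Fintype.sum_prod_type _
  calc 0 ≤ star (Function.uncurry c) ⬝ᵥ (Matrix.comp κ κ ι ι 𝕜 B *ᵥ Function.uncurry c) :=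
        hB.dotProduct_mulVec_nonneg _
    _ = ∑ j, star (c j) ⬝ᵥ ∑ k, B j k *ᵥ c k := by
        simp only [dotProduct, Fintype.sum_prod_type, hblock, Finset.sum_apply, Pi.star_apply,
          Function.uncurry_apply_pair]
    _ = ∑ j, ∑ k, star (c j) ⬝ᵥ (B j k *ᵥ c k) := by
        simp only [dotProduct_sum]

end PosSemidef

theorem norm_Gker_le (n : ℕ) (μ : ℤ) (lam : ℝ) : ‖Gker n μ lam‖ ≤ |(μ : ℝ)| ^ n := by
  unfold Gker
  split_ifs with hlam
  · simp only [norm_pow, Complex.norm_intCast, le_refl]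
  · have hexp : ‖1 - Complex.exp (-Complex.I * μ * lam)‖ ≤ |(μ : ℝ)| * |lam| := by
      have harg : -Complex.I * μ * lam = Complex.I * ((-(μ * lam) : ℝ) : ℂ) := by
        push_cast
        ring
      rw [harg, norm_sub_rev, ← abs_mul, ← abs_neg]
      exact Real.norm_exp_I_mul_ofReal_sub_one_le
    have hden : ‖Complex.I * lam‖ = |lam| := by
      rw [norm_mul, Complex.norm_I, one_mul, Complex.norm_real, Real.norm_eq_abs]
    rw [← div_pow, norm_pow, norm_div, hden]
    gcongr
    exact div_le_of_le_mul₀ (abs_nonneg _) (abs_nonneg _) hexp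

theorem measurable_Gker (n : ℕ) (μ : ℤ) : Measurable (Gker n μ) :=
  Measurable.ite (measurableSet_singleton 0) measurable_const (by fun_prop)

/-- The spectral weight `e^{iλm} G_μ(λ)`: the kernel `D(m₁ − m₂; μ₁, μ₂)` is the integral of
`spectralWeight n m₁ μ₁ * conj (spectralWeight n m₂ μ₂)` against the spectral density. -/
noncomputable def spectralWeight (n : ℕ) (m μ : ℤ) (lam : ℝ) : ℂ :=
  Complex.exp (Complex.I * lam * m) * Gker n μ lam

theorem norm_spectralWeight_le (n : ℕ) (m μ : ℤ) (lam : ℝ) :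
    ‖spectralWeight n m μ lam‖ ≤ |(μ : ℝ)| ^ n := by
  have harg : Complex.I * lam * m = Complex.I * ((lam * m : ℝ) : ℂ) := by
    push_cast
    ring
  rw [spectralWeight, norm_mul, harg, Complex.norm_exp_I_mul_ofReal, one_mul]
  exact norm_Gker_le n μ lam

theorem measurable_spectralWeight (n : ℕ) (m μ : ℤ) : Measurable (spectralWeight n m μ) :=
  Measurable.mul (by fun_prop) (measurable_Gker n μ)

theorem spectralWeight_mul_conj (n : ℕ) (m₁ m₂ μ₁ μ₂ : ℤ) (lam : ℝ) :
    spectralWeight n m₁ μ₁ lam * (starRingEnd ℂ) (spectralWeight n m₂ μ₂ lam) =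
      Complex.exp (Complex.I * lam * (m₁ - m₂ : ℤ)) * Gker n μ₁ lam
        * (starRingEnd ℂ) (Gker n μ₂ lam) := by
  have hexp : Complex.exp (Complex.I * lam * (m₁ - m₂ : ℤ)) =
      Complex.exp (Complex.I * lam * m₁) *
        (starRingEnd ℂ) (Complex.exp (Complex.I * lam * m₂)) := by
    rw [← Complex.exp_conj, ← Complex.exp_add]
    simp only [map_mul, Complex.conj_I, Complex.conj_ofReal, map_intCast, Int.cast_sub]
    ring_nf
  rw [hexp, spectralWeight, spectralWeight, map_mul]
  ring

theorem integrable_spectralWeight_mul_conj_mul {ν : Measure ℝ} {g : ℝ → ℂ}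
    (hg : Integrable g ν) (n : ℕ) (m₁ m₂ μ₁ μ₂ : ℤ) :
    Integrable (fun lam => spectralWeight n m₁ μ₁ lam *
      (starRingEnd ℂ) (spectralWeight n m₂ μ₂ lam) * g lam) ν := by
  refine hg.bdd_mul (c := |(μ₁ : ℝ)| ^ n * |(μ₂ : ℝ)| ^ n) ?_ (.of_forall fun lam => ?_)
  · exact ((measurable_spectralWeight n m₁ μ₁).mul
      (Complex.continuous_conj.measurable.comp
        (measurable_spectralWeight n m₂ μ₂))).aestronglyMeasurable
  · rw [norm_mul, RCLike.norm_conj]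
    gcongr
    exacts [norm_spectralWeight_le n m₁ μ₁ lam, norm_spectralWeight_le n m₂ μ₂ lam]

open scoped Kronecker in
theorem matrix_structural_kernel_posSemidef_general {ι κ : Type*} [Fintype ι] [Fintype κ]
    (n : ℕ) {ν : Measure ℝ} (f : ℝ → Matrix ι ι ℂ)
    (hint : ∀ i j, Integrable (fun lam => f lam i j) ν)
    (hpsd : ∀ᵐ lam ∂ν, (f lam).PosSemidef)
    (D : ℤ → ℤ → ℤ → Matrix ι ι ℂ)
    (hD : ∀ (m μ₁ μ₂ : ℤ) (i j : ι), D m μ₁ μ₂ i j =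
      ∫ lam, Complex.exp (Complex.I * (lam : ℂ) * (m : ℂ)) * Gker n μ₁ lam
        * (starRingEnd ℂ) (Gker n μ₂ lam) * f lam i j ∂ν)
    (m μ : κ → ℤ) (c : κ → ι → ℂ) :
    0 ≤ ∑ j, ∑ k, dotProduct (star (c j)) ((D (m j - m k) (μ j) (μ k)).mulVec (c k)) := by
  let w (lam : ℝ) (j : κ) : ℂ := spectralWeight n (m j) (μ j) lam
  let A (lam : ℝ) : Matrix (κ × ι) (κ × ι) ℂ := Matrix.vecMulVec (w lam) (star (w lam)) ⊗ₖ f lam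
  have hA_int (p q : κ × ι) : Integrable (fun lam => A lam p q) ν :=
    integrable_spectralWeight_mul_conj_mul (hint p.2 q.2) n _ _ _ _
  have hA_psd : ∀ᵐ lam ∂ν, (A lam).PosSemidef :=
    hpsd.mono fun lam hf => (Matrix.posSemidef_vecMulVec_self_star (w lam)).kronecker hf
  have hcomp : Matrix.comp κ κ ι ι ℂ (.of fun j k => D (m j - m k) (μ j) (μ k)) =
      Matrix.of fun p q => ∫ lam, A lam p q ∂ν := by
    ext ⟨j, a⟩ ⟨k, b⟩
    refine (hD (m j - m k) (μ j) (μ k) a b).trans (integral_congr_ae (.of_forall fun lam => ?_))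
    exact congrArg (· * f lam a b) (spectralWeight_mul_conj n (m j) (m k) (μ j) (μ k) lam).symm
  exact sum_dotProduct_mulVec_nonneg_of_posSemidef_comp
    (hcomp ▸ posSemidef_integral hA_int hA_psd) c

/-- for a measurable, integrable, a.e. Hermitian positive semidefinite matrix
spectral density `f` on `[−π, π)`, the matrix kernel
`D(m; μ₁, μ₂) = ∫_{−π}^{π} e^{iλm} G_{μ₁}(λ) conj(G_{μ₂}(λ)) f(λ) dλ`
is positive semidefinite: every sum `Σ_j Σ_k c_j^* D(m_j − m_k; μ_j, μ_k) c_k`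
is a nonnegative real number. -/
theorem matrix_structural_kernel_posSemidef (n T : ℕ) (hn : 1 ≤ n) (hT : 1 ≤ T)
    (f : ℝ → Matrix (Fin T) (Fin T) ℂ)
    (hmeas : ∀ i j, Measurable fun lam => f lam i j)
    (hint : ∀ i j, IntegrableOn (fun lam => f lam i j) (Set.Ico (-Real.pi) Real.pi))
    (hpsd : ∀ᵐ lam ∂(volume.restrict (Set.Ico (-Real.pi) Real.pi)), (f lam).PosSemidef)
    (D : ℤ → ℤ → ℤ → Matrix (Fin T) (Fin T) ℂ)
    (hD : ∀ (m μ₁ μ₂ : ℤ) (i j : Fin T), D m μ₁ μ₂ i j =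
      ∫ lam in Set.Ico (-Real.pi) Real.pi,
        Complex.exp (Complex.I * (lam : ℂ) * (m : ℂ)) * Gker n μ₁ lam
          * (starRingEnd ℂ) (Gker n μ₂ lam) * f lam i j)
    (r : ℕ) (m μ : Fin r → ℤ) (c : Fin r → Fin T → ℂ) :
    0 ≤ (∑ j, ∑ k,
          dotProduct (star (c j)) ((D (m j - m k) (μ j) (μ k)).mulVec (c k))).re ∧
      (∑ j, ∑ k,
          dotProduct (star (c j)) ((D (m j - m k) (μ j) (μ k)).mulVec (c k))).im = 0 := by
  simpa only [Complex.nonneg_iff, eq_comm] using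
    matrix_structural_kernel_posSemidef_general n f hint hpsd D hD m μ c
end
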